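/- There exists C > 0 such that for every β > 0, every positive integer n, and every x ∈ ℝ³ the following holds. Let 𝒥 be the set of nonempty words w with letters in {1,2,3} that end with the block (1,2,3) (i.e. the last three letters of w are 1,2,3 in this order) and satisfy ‖κ(A_w)/n − x‖ ≤ β. Then for every j ∈ 𝒥, the set of words w ∈ 𝒥 of the form w = j·j'' with j'' a nonempty word (i.e. j is a proper prefix of w) is finite and has at most exp(Cβn) elements. -/

import Mathlib

/-!
Since `j` ends with the block `B = A₁A₂A₃`, all of whose entries are positive, the norm is almost
multiplicative at the cut between `j` and `j''`: writing `s(K)` for the sum of the entries of the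
nonnegative matrix `K = A_{j''}`, one has `s(K) ‖A_j‖ ≤ 6 ‖A_j K‖` (`entrySum_mul_sval1_le`).
Closeness of the first Cartan coordinates of `A_j` and `A_w` then gives `s(K) ≤ 6 exp(2βn)`.

A nonempty word `j''` such that both `j` and `j ++ j''` end with `(1,2,3)` itself ends with
`(1,2,3)`, so
`s(K) ≥ 9`. Hence an extension exists only if `exp(2βn) ≥ 3/2`, which absorbs the multiplicative
constants into the exponent: `s(K) + 1 ≤ exp(14βn)`.

Finally `w ↦ A_w` is injective (`Aw_injective`) with values in matrices with natural entries, so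
at most `(R + 1)⁹` words satisfy `s(A_w) ≤ R`.
-/

open Matrix MeasureTheory

noncomputable section

abbrev M3 := Matrix (Fin 3) (Fin 3) ℝ
abbrev E3 := EuclideanSpace ℝ (Fin 3)

/-- The Rauzy generators. -/
def A : Fin 3 → M3
  | 0 => !![1,1,1; 0,1,0; 0,0,1]
  | 1 => !![1,0,0; 1,1,1; 0,0,1]
  | 2 => !![1,0,0; 0,1,0; 1,1,1]

/-- Product of the matrices along a word. -/
def Aw (w : List (Fin 3)) : M3 := (w.map A).prod

/-- Euclidean norm of a vector in `ℝ³`. -/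
def enorm3 (v : Fin 3 → ℝ) : ℝ := Real.sqrt (v 0 ^ 2 + v 1 ^ 2 + v 2 ^ 2)

/-- Largest singular value = `ℓ²` operator norm. -/
def sval1 (g : M3) : ℝ := ‖(Matrix.toEuclideanLin g).toContinuousLinearMap‖

/-- Smallest singular value (for invertible `g`): `σ₃(g) = σ₁(g⁻¹)⁻¹`. -/
def sval3 (g : M3) : ℝ := (sval1 g⁻¹)⁻¹

/-- Middle singular value (for invertible `g`): `σ₂ = |det g|·σ₁(g⁻¹)/σ₁(g)`. -/
def sval2 (g : M3) : ℝ := |g.det| * sval1 g⁻¹ / sval1 g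

def basis3 (i : Fin 3) : Fin 3 → ℝ := Pi.single i 1

def omega3 (v : Fin 3 → ℝ) : ℝ := v 0 + v 1 + v 2

def ofE : E3 → (Fin 3 → ℝ) := WithLp.equiv 2 (Fin 3 → ℝ)
def toE : (Fin 3 → ℝ) → E3 := (WithLp.equiv 2 (Fin 3 → ℝ)).symm

/-- The standard 2-simplex in `ℝ³` (with the Euclidean metric). -/
def simplex : Set E3 := {x | (∀ i, 0 ≤ ofE x i) ∧ omega3 (ofE x) = 1}

/-- The projective action of the word `w` on the simplex. -/
def fmap (w : List (Fin 3)) (x : E3) : E3 :=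
  toE ((omega3 ((Aw w) *ᵥ ofE x))⁻¹ • ((Aw w) *ᵥ ofE x))

/-- The Rauzy gasket. -/
def gasket : Set E3 :=
  ⋂ n : ℕ, ⋃ w ∈ {w : List (Fin 3) | w.length = n + 1}, fmap w '' simplex

/-- Falconer's singular value function. -/
def phi (s : ℝ) (g : M3) : ℝ :=
  if s ≤ 1 then (sval2 g / sval1 g) ^ s
  else (sval2 g / sval1 g) * (sval3 g / sval1 g) ^ (s - 1)

/-- The affinity exponent of the Rauzy semigroup. -/
def sA : ℝ :=
  sSup {s : ℝ | s ∈ Set.Ioc (0:ℝ) 2 ∧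
    ¬ Summable fun w : {w : List (Fin 3) // w ≠ []} => phi s (Aw w.1)}

/-- A word has its last `k` letters not all the same. -/
def LastNotAllSame (w : List (Fin 3)) (k : ℕ) : Prop :=
  k ≤ w.length ∧ ¬ ∃ c, ∀ x ∈ w.drop (w.length - k), x = c

/-- A word's last two letters are different. -/
def LastTwoDiff (w : List (Fin 3)) : Prop :=
  ∃ u a b, w = u ++ [a, b] ∧ a ≠ b

/-- The Cartan projection `κ(g) = (log σ₁, log σ₂, log σ₃)`. -/
def kappa (g : M3) : Fin 3 → ℝ :=
  ![Real.log (sval1 g), Real.log (sval2 g), Real.log (sval3 g)]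

/-- The linear functional `ψ_s` on the Cartan algebra. -/
def psi (s : ℝ) (lam : Fin 3 → ℝ) : ℝ := (lam 0 - lam 1) + (s - 1) * (lam 0 - lam 2)

end

/-! ### Euclidean norm and operator norm -/

/-- Sum of the entries of a matrix. -/
def entrySum (K : M3) : ℝ := ∑ i, ∑ k, K i k

/-- The Euclidean norm on `Fin 3 → ℝ`, whose own norm is the sup norm. -/
noncomputable def enrm (v : Fin 3 → ℝ) : ℝ := ‖(WithLp.toLp 2 v : E3)‖

lemma enrm_sq (v : Fin 3 → ℝ) : enrm v ^ 2 = v 0 ^ 2 + v 1 ^ 2 + v 2 ^ 2 := by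
  simp [enrm, EuclideanSpace.norm_sq_eq, Fin.sum_univ_three]

lemma enrm_nonneg (v : Fin 3 → ℝ) : 0 ≤ enrm v := norm_nonneg _

lemma enrm_mono {v w : Fin 3 → ℝ} (h : ∀ i, |v i| ≤ w i) : enrm v ≤ enrm w := by
  apply le_of_sq_le_sq _ (enrm_nonneg w)
  rw [enrm_sq, enrm_sq]
  have (i : Fin 3) : v i ^ 2 ≤ w i ^ 2 := sq_le_sq.2 ((h i).trans (le_abs_self _))
  linarith [this 0, this 1, this 2]

lemma enrm_mulVec_le (g : M3) (v : Fin 3 → ℝ) : enrm (g *ᵥ v) ≤ sval1 g * enrm v := by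
  have := (Matrix.toEuclideanLin g).toContinuousLinearMap.le_opNorm (WithLp.toLp 2 v)
  simpa [enrm, sval1] using this

lemma sval1_le (g : M3) (c : ℝ) (hc : 0 ≤ c) (h : ∀ v, enrm (g *ᵥ v) ≤ c * enrm v) :
    sval1 g ≤ c := by
  refine ContinuousLinearMap.opNorm_le_bound _ hc fun x => ?_
  exact h (WithLp.ofLp x)

/-! ### Entries of word matrices and freeness of the semigroup -/

lemma Aw_cons (a : Fin 3) (l : List (Fin 3)) : Aw (a :: l) = A a * Aw l := by simp [Aw]

lemma Aw_append (u v : List (Fin 3)) : Aw (u ++ v) = Aw u * Aw v := by simp [Aw]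

lemma A_mul_self (a : Fin 3) (M : M3) (k : Fin 3) : (A a * M) a k = ∑ m, M m k := by
  fin_cases a <;> simp [A, Matrix.mul_apply, Fin.sum_univ_three]

lemma A_mul_ne {a i : Fin 3} (h : i ≠ a) (M : M3) (k : Fin 3) : (A a * M) i k = M i k := by
  fin_cases a <;> fin_cases i <;> first
    | exact absurd rfl h
    | simp [A, Matrix.mul_apply, Fin.sum_univ_three]

lemma Aw_nat (w : List (Fin 3)) : ∃ P : Fin 3 → Fin 3 → ℕ, ∀ i k, Aw w i k = P i k := by
  induction w with
  | nil =>
    refine ⟨fun i k => if i = k then 1 else 0, fun i k => ?_⟩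
    simp [Aw, Matrix.one_apply]
  | cons a l ih =>
    obtain ⟨P, hP⟩ := ih
    refine ⟨fun i k => if i = a then ∑ m, P m k else P i k, fun i k => ?_⟩
    rw [Aw_cons]
    by_cases h : i = a
    · subst h
      simp [A_mul_self, hP]
    · simp [A_mul_ne h, hP, h]

lemma Aw_nonneg (w : List (Fin 3)) (i k : Fin 3) : 0 ≤ Aw w i k := by
  obtain ⟨P, hP⟩ := Aw_nat w
  rw [hP]; positivity

lemma Aw_diag (w : List (Fin 3)) (i : Fin 3) : 1 ≤ Aw w i i := by
  induction w with
  | nil => simp [Aw]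
  | cons a l ih =>
    rw [Aw_cons]
    by_cases h : i = a
    · subst h
      rw [A_mul_self]
      exact ih.trans (Finset.single_le_sum (fun m _ => Aw_nonneg l m i) (Finset.mem_univ i))
    · rwa [A_mul_ne h]

/-- Column `k ≠ a` of `A_a M` has an entry of size at least one off the diagonal, so the product
is never the identity. -/
lemma Aw_cons_ne_one (a : Fin 3) (l : List (Fin 3)) : Aw (a :: l) ≠ 1 := by
  intro h
  obtain ⟨k, hk⟩ : ∃ k : Fin 3, k ≠ a := exists_ne a
  have h1 := A_mul_self a (Aw l) k
  rw [← Aw_cons, h, Matrix.one_apply_ne hk.symm] at h1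
  have := Finset.single_le_sum (fun m _ => Aw_nonneg l m k) (Finset.mem_univ k)
  linarith [Aw_diag l k]

/-- The semigroup is free. For distinct first letters `a ≠ b`, the row `a` of `A_a M` dominates
its row `b`, and conversely for `A_b N`; equality of the products would force row `a` of `M`
to vanish. -/
lemma Aw_injective : Function.Injective Aw := by
  intro w
  induction w with
  | nil =>
    intro v h
    cases v with
    | nil => rfl
    | cons b m => exact absurd (h.symm.trans (by simp [Aw])) (Aw_cons_ne_one b m)
  | cons a l ih =>
    intro v h
    cases v with
    | nil => exact absurd (h.trans (by simp [Aw])) (Aw_cons_ne_one a l)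
    | cons b m =>
      have hab : a = b := by
        by_contra hab
        rw [Aw_cons, Aw_cons] at h
        have h1 : ∑ i, Aw l i a = Aw m a a := by
          rw [← A_mul_self a (Aw l) a, h, A_mul_ne hab]
        have h2 : Aw l b a = ∑ i, Aw m i a := by
          rw [← A_mul_self b (Aw m) a, ← h, A_mul_ne (Ne.symm hab)]
        have h3 := Finset.single_le_sum (fun i _ => Aw_nonneg m i a) (Finset.mem_univ a)
        have h4 : Aw l a a + Aw l b a ≤ ∑ i, Aw l i a :=
          Finset.add_le_sum (fun i _ => Aw_nonneg l i a) (Finset.mem_univ a)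
            (Finset.mem_univ b) hab
        linarith [Aw_diag l a]
      subst hab
      have hu : IsUnit (A a) := by
        rw [Matrix.isUnit_iff_isUnit_det]
        fin_cases a <;> simp [A, Matrix.det_fin_three]
      rw [Aw_cons, Aw_cons] at h
      rw [ih (hu.mul_left_cancel h)]

/-! ### Almost-multiplicativity of the norm -/

lemma Aw_block : Aw [0, 1, 2] = !![4, 3, 2; 2, 2, 1; 1, 1, 1] := by
  simp only [Aw, A, List.map_cons, List.map_nil, List.prod_cons, List.prod_nil, mul_one]
  simp only [Matrix.mul_fin_three]
  norm_num

lemma mulVec_apply_three (g : M3) (v : Fin 3 → ℝ) (i : Fin 3) :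
    (g *ᵥ v) i = g i 0 * v 0 + g i 1 * v 1 + g i 2 * v 2 := by
  simp [Matrix.mulVec, dotProduct, Fin.sum_univ_three]

/-- Almost-multiplicativity of the norm across the positive block. Each row of the block has
entries within a factor `2` of each other, so `B |v| ≤ (2 |v|₁ / s(K)) B K 1` entrywise; the
remaining factor `3` comes from comparing the `ℓ¹` and `ℓ²` norms of `v` and of the vector `1`. -/
lemma entrySum_mul_sval1_le (u k : List (Fin 3)) :
    entrySum (Aw k) * sval1 (Aw (u ++ [0, 1, 2])) ≤ 6 * sval1 (Aw (u ++ [0, 1, 2] ++ k)) := by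
  set s := entrySum (Aw k) with hs
  have hs' : s = (Aw k *ᵥ 1) 0 + (Aw k *ᵥ 1) 1 + (Aw k *ᵥ 1) 2 := by
    simp [hs, entrySum, Fin.sum_univ_three, mulVec_apply_three]
  have hz (i : Fin 3) : 0 ≤ (Aw k *ᵥ 1) i := by
    simp only [mulVec_apply_three, Pi.one_apply, mul_one]
    linarith [Aw_nonneg k i 0, Aw_nonneg k i 1, Aw_nonneg k i 2]
  have hspos : 0 < s := by
    simp only [hs, entrySum, Fin.sum_univ_three]
    linarith [Aw_diag k 0, Aw_diag k 1, Aw_diag k 2, Aw_nonneg k 0 1, Aw_nonneg k 0 2,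
      Aw_nonneg k 1 0, Aw_nonneg k 1 2, Aw_nonneg k 2 0, Aw_nonneg k 2 1]
  set T := sval1 (Aw (u ++ [0, 1, 2] ++ k)) with hT
  have hT0 : 0 ≤ T := norm_nonneg _
  suffices h : sval1 (Aw (u ++ [0, 1, 2])) ≤ 6 * T / s by
    rw [le_div_iff₀ hspos] at h
    linarith
  refine sval1_le _ _ (by positivity) fun v => ?_
  set L := |v 0| + |v 1| + |v 2| with hL
  have hL0 : 0 ≤ L := by positivity
  have hLv : L ^ 2 ≤ 3 * enrm v ^ 2 := by
    rw [enrm_sq, hL, ← sq_abs (v 0), ← sq_abs (v 1), ← sq_abs (v 2)]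
    nlinarith [sq_nonneg (|v 0| - |v 1|), sq_nonneg (|v 0| - |v 2|), sq_nonneg (|v 1| - |v 2|)]
  have h1 : enrm (fun _ => 2 * L / s) ^ 2 = 3 * (2 * L / s) ^ 2 := by
    rw [enrm_sq]; ring
  -- comparison after the block, entry by entry
  have hB (i : Fin 3) : |(Aw [0, 1, 2] *ᵥ v) i| ≤
      (Aw [0, 1, 2] *ᵥ (Aw k *ᵥ fun _ => 2 * L / s)) i := by
    have hc : (fun _ => 2 * L / s : Fin 3 → ℝ) = (2 * L / s) • (1 : Fin 3 → ℝ) := by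
      ext; simp
    rw [hc, Matrix.mulVec_smul, Matrix.mulVec_smul, Pi.smul_apply, smul_eq_mul,
      div_mul_eq_mul_div, le_div_iff₀ hspos, mulVec_apply_three, mulVec_apply_three, Aw_block]
    have p0 := hz 0
    have p1 := hz 1
    have p2 := hz 2
    generalize (Aw k *ᵥ 1) 0 = a at *
    generalize (Aw k *ᵥ 1) 1 = b at *
    generalize (Aw k *ᵥ 1) 2 = c at *
    have q0 := le_abs_self (v 0)
    have q1 := le_abs_self (v 1)
    have q2 := le_abs_self (v 2)
    have r0 := neg_abs_le (v 0)
    have r1 := neg_abs_le (v 1)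
    have r2 := neg_abs_le (v 2)
    have n0 := abs_nonneg (v 0)
    have n1 := abs_nonneg (v 1)
    have n2 := abs_nonneg (v 2)
    fin_cases i <;> simp
    · have : |4 * v 0 + 3 * v 1 + 2 * v 2| ≤ 4 * L := by
        rw [abs_le]; constructor <;> linarith
      calc _ ≤ 4 * L * s := by gcongr
        _ = 2 * L * (2 * a + 2 * b + 2 * c) := by rw [hs']; ring
        _ ≤ _ := by gcongr <;> norm_num
    · have : |2 * v 0 + 2 * v 1 + v 2| ≤ 2 * L := by
        rw [abs_le]; constructor <;> linarith
      calc _ ≤ 2 * L * s := by gcongr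
        _ = 2 * L * (a + b + c) := by rw [hs']
        _ ≤ _ := by gcongr <;> linarith
    · have : |v 0 + v 1 + v 2| ≤ 2 * L := by
        rw [abs_le]; constructor <;> linarith
      calc _ ≤ 2 * L * s := by gcongr
        _ = 2 * L * (a + b + c) := by rw [hs']
  have hmono : enrm (Aw (u ++ [0, 1, 2]) *ᵥ v) ≤
      enrm (Aw (u ++ [0, 1, 2] ++ k) *ᵥ fun _ => 2 * L / s) := by
    apply enrm_mono
    intro i
    rw [Aw_append, Aw_append, Aw_append, ← Matrix.mulVec_mulVec, ← Matrix.mulVec_mulVec,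
      ← Matrix.mulVec_mulVec, mulVec_apply_three (Aw u), mulVec_apply_three (Aw u)]
    refine (abs_add_three _ _ _).trans ?_
    simp only [abs_mul, abs_of_nonneg (Aw_nonneg u _ _)]
    gcongr
    all_goals first | exact Aw_nonneg u _ _ | exact hB _
  have h2 : enrm (fun _ => 2 * L / s) ≤ 6 / s * enrm v := by
    apply le_of_sq_le_sq _ (mul_nonneg (by positivity) (enrm_nonneg v))
    rw [h1]
    have : (6 / s * enrm v) ^ 2 = 12 / s ^ 2 * (3 * enrm v ^ 2) := by
      ring
    rw [this]
    calc 3 * (2 * L / s) ^ 2 = 12 / s ^ 2 * L ^ 2 := by ring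
      _ ≤ _ := by gcongr
  calc _ ≤ _ := hmono
    _ ≤ T * enrm (fun _ => 2 * L / s) := enrm_mulVec_le _ _
    _ ≤ T * (6 / s * enrm v) := by gcongr
    _ = _ := by ring

lemma sval1_Aw_pos (w : List (Fin 3)) : 0 < sval1 (Aw w) := by
  by_contra! h
  have h1 := enrm_mulVec_le (Aw w) (Pi.single 0 1)
  have h2 : enrm (Aw w *ᵥ Pi.single 0 1) ≤ 0 :=
    h1.trans (mul_nonpos_of_nonpos_of_nonneg h (enrm_nonneg _))
  have h3 : enrm (Aw w *ᵥ Pi.single 0 1) = 0 := le_antisymm h2 (enrm_nonneg _)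
  have h4 := enrm_sq (Aw w *ᵥ Pi.single 0 1)
  rw [h3] at h4
  simp only [mulVec_apply_three] at h4
  simp at h4
  nlinarith [Aw_diag w 0, sq_nonneg (Aw w 1 0), sq_nonneg (Aw w 2 0)]

/-! ### Words ending with the block, and counting -/

/-- The occurrences of the block `(1,2,3)` at the ends of `j` and of `j ++ k` cannot overlap. -/
lemma suffix_block {u v k : List (Fin 3)} (hk : k ≠ [])
    (h : u ++ [0, 1, 2] ++ k = v ++ [0, 1, 2]) : ∃ c, k = c ++ [0, 1, 2] := by
  rcases List.append_eq_append_iff.1 h with ⟨c, _, hc⟩ | ⟨c, h1, h2⟩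
  · exact ⟨c, hc⟩
  · match c, h1, h2 with
    | [], _, h2 => exact ⟨[], by simpa using h2.symm⟩
    | [a], h1, h2 =>
      have := congrArg List.getLast? h1
      simp at this h2
      omega
    | [a, b], h1, h2 =>
      have := congrArg List.getLast? h1
      simp at this h2
      omega
    | a :: b :: c :: d, h1, h2 =>
      simp at h2
      exact absurd h2.2.2.2.2 hk

lemma nine_le_entrySum (c : List (Fin 3)) : 9 ≤ entrySum (Aw (c ++ [0, 1, 2])) := by
  have h (i k : Fin 3) : 1 ≤ Aw (c ++ [0, 1, 2]) i k := by
    have h1 (m : Fin 3) : 1 ≤ Aw [0, 1, 2] m k := by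
      rw [Aw_block]; fin_cases m <;> fin_cases k <;> norm_num
    rw [Aw_append, Matrix.mul_apply]
    calc (1 : ℝ) ≤ Aw c i i * Aw [0, 1, 2] i k :=
          one_le_mul_of_one_le_of_one_le (Aw_diag c i) (h1 i)
      _ ≤ _ := Finset.single_le_sum (f := fun m => Aw c i m * Aw [0, 1, 2] m k)
          (fun m _ => mul_nonneg (Aw_nonneg c i m) (zero_le_one.trans (h1 m)))
          (Finset.mem_univ i)
  simp only [entrySum, Fin.sum_univ_three]
  linarith [h 0 0, h 0 1, h 0 2, h 1 0, h 1 1, h 1 2, h 2 0, h 2 1, h 2 2]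

/-- Polynomial growth: distinct words give distinct matrices with natural entries, and there are
at most `(R + 1)⁹` such matrices with all entries at most `R`. -/
lemma count_words (R : ℝ) (hR : 0 ≤ R) :
    {k : List (Fin 3) | entrySum (Aw k) ≤ R}.Finite ∧
      ({k : List (Fin 3) | entrySum (Aw k) ≤ R}.ncard : ℝ) ≤ (R + 1) ^ 9 := by
  choose P hP using Aw_nat
  have hinj : Function.Injective P := fun v w h => Aw_injective <| by
    ext i k; rw [hP, hP, h]
  let F : Finset (Fin 3 → Fin 3 → ℕ) :=
    Fintype.piFinset fun _ => Fintype.piFinset fun _ => Finset.range (⌊R⌋₊ + 1)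
  have hmaps : ∀ k ∈ {k : List (Fin 3) | entrySum (Aw k) ≤ R}, P k ∈ (F : Set _) := by
    intro k hk
    simp only [F, Finset.mem_coe, Fintype.mem_piFinset, Finset.mem_range, Nat.lt_succ_iff]
    intro a b
    apply Nat.le_floor
    rw [← hP]
    refine le_trans ?_ hk
    calc Aw k a b ≤ ∑ b, Aw k a b :=
          Finset.single_le_sum (fun b _ => Aw_nonneg k a b) (Finset.mem_univ b)
      _ ≤ _ := Finset.single_le_sum (f := fun a => ∑ b, Aw k a b)
          (fun a _ => Finset.sum_nonneg fun b _ => Aw_nonneg k a b) (Finset.mem_univ a)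
  refine ⟨Set.Finite.of_injOn hmaps hinj.injOn F.finite_toSet, ?_⟩
  have h := Set.ncard_le_ncard_of_injOn P hmaps hinj.injOn F.finite_toSet
  rw [Set.ncard_coe_finset] at h
  have hF : F.card = (⌊R⌋₊ + 1) ^ 9 := by
    simp [F, Fintype.card_piFinset, ← pow_mul]
  rw [hF] at h
  calc _ ≤ (((⌊R⌋₊ + 1) ^ 9 : ℕ) : ℝ) := by exact_mod_cast h
    _ ≤ _ := by
      push_cast
      have := Nat.floor_le hR
      gcongr

/-! ### The multiplicity bound -/

lemma abs_le_enorm3 (v : Fin 3 → ℝ) : |v 0| ≤ enorm3 v :=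
  Real.abs_le_sqrt (by nlinarith [sq_nonneg (v 1), sq_nonneg (v 2)])

lemma log_sval1_sub_le {β : ℝ} {n : ℕ} (hn : 0 < n) {x : Fin 3 → ℝ} {g h : M3}
    (hg : enorm3 (fun i => kappa g i / n - x i) ≤ β)
    (hh : enorm3 (fun i => kappa h i / n - x i) ≤ β) :
    Real.log (sval1 h) - Real.log (sval1 g) ≤ 2 * β * n := by
  have h1 := abs_le.1 ((abs_le_enorm3 _).trans hg)
  have h2 := abs_le.1 ((abs_le_enorm3 _).trans hh)
  simp only [kappa, Matrix.cons_val_zero] at h1 h2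
  have hn' : (0 : ℝ) < n := by exact_mod_cast hn
  have : (Real.log (sval1 h) - Real.log (sval1 g)) / n ≤ 2 * β := by
    rw [sub_div]; linarith
  rwa [div_le_iff₀ hn'] at this

/-- Prefix-multiplicity bound: in the set of words ending with the block `(1,2,3)` and
with Cartan projection `βn`-close to `nx`, each word has at most `exp(Cβn)` proper
extensions inside the set. -/
theorem prefix_multiplicity_bound :
    ∃ C > (0:ℝ), ∀ β : ℝ, 0 < β → ∀ n : ℕ, 0 < n → ∀ x : Fin 3 → ℝ,
      ∀ j ∈ {w : List (Fin 3) | (∃ u, w = u ++ [0, 1, 2]) ∧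
          enorm3 (fun i => kappa (Aw w) i / n - x i) ≤ β},
        ({w : List (Fin 3) | ((∃ u, w = u ++ [0, 1, 2]) ∧
            enorm3 (fun i => kappa (Aw w) i / n - x i) ≤ β) ∧
          ∃ j'' : List (Fin 3), j'' ≠ [] ∧ w = j ++ j''}).Finite ∧
        (({w : List (Fin 3) | ((∃ u, w = u ++ [0, 1, 2]) ∧
            enorm3 (fun i => kappa (Aw w) i / n - x i) ≤ β) ∧
          ∃ j'' : List (Fin 3), j'' ≠ [] ∧ w = j ++ j''}).ncard : ℝ) ≤
          Real.exp (C * β * n) := by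
  refine ⟨126, by norm_num, ?_⟩
  rintro β hβ n hn x j ⟨⟨u, rfl⟩, hj⟩
  set S := {w : List (Fin 3) | ((∃ u, w = u ++ [0, 1, 2]) ∧
            enorm3 (fun i => kappa (Aw w) i / n - x i) ≤ β) ∧
          ∃ j'' : List (Fin 3), j'' ≠ [] ∧ w = (u ++ [0, 1, 2]) ++ j''} with hS
  set R := 6 * Real.exp (2 * β * n) with hR
  have hR0 : 0 ≤ R := by positivity
  have key : ∀ k : List (Fin 3), k ≠ [] → u ++ [0, 1, 2] ++ k ∈ S →
      entrySum (Aw k) ≤ R ∧ 9 ≤ entrySum (Aw k) := by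
    rintro k hk ⟨⟨⟨v, hv⟩, hw⟩, -⟩
    obtain ⟨c, rfl⟩ := suffix_block hk hv
    refine ⟨?_, nine_le_entrySum c⟩
    have h1 := log_sval1_sub_le hn hj hw
    have hp := sval1_Aw_pos (u ++ [0, 1, 2])
    have hq := sval1_Aw_pos (u ++ [0, 1, 2] ++ (c ++ [0, 1, 2]))
    rw [← Real.log_div hq.ne' hp.ne', Real.log_le_iff_le_exp (div_pos hq hp),
      div_le_iff₀ hp] at h1
    have h2 := entrySum_mul_sval1_le u (c ++ [0, 1, 2])
    refine le_of_mul_le_mul_right (h2.trans ?_) hp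
    rw [hR]
    linarith
  have hsub : S ⊆ (fun k => u ++ [0, 1, 2] ++ k) '' {k | entrySum (Aw k) ≤ R} := by
    intro w hw
    obtain ⟨k, hk, rfl⟩ := hw.2
    exact ⟨k, (key k hk hw).1, rfl⟩
  obtain ⟨hfin, hcard⟩ := count_words R hR0
  have hfin' := hfin.image (fun k => u ++ [0, 1, 2] ++ k)
  refine ⟨hfin'.subset hsub, ?_⟩
  rcases S.eq_empty_or_nonempty with hE | ⟨w, hw⟩
  · rw [hE]
    simpa using (Real.exp_pos _).le
  · obtain ⟨k, hk, rfl⟩ := hw.2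
    obtain ⟨k1, k2⟩ := key k hk hw
    -- `E ≥ 3/2` turns the bound `R + 1 ≤ 7 E` into a pure power of `E`
    set E := Real.exp (2 * β * n) with hEdef
    have hE : 3 / 2 ≤ E := by linarith
    have hRE : R + 1 ≤ E ^ 7 := by
      have h6 : (3 / 2 : ℝ) ^ 6 ≤ E ^ 6 := by gcongr
      have : E ^ 7 = E ^ 6 * E := by ring
      nlinarith
    calc (S.ncard : ℝ) ≤ ({k | entrySum (Aw k) ≤ R}.ncard : ℝ) := by
          exact_mod_cast (Set.ncard_le_ncard hsub hfin').trans (Set.ncard_image_le hfin)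
      _ ≤ (R + 1) ^ 9 := hcard
      _ ≤ (E ^ 7) ^ 9 := by gcongr
      _ = Real.exp (126 * β * n) := by
          rw [hEdef, ← pow_mul, ← Real.exp_nat_mul]
          congr 1
          push_cast
          ring
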